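/- arXiv:1807.06360 — 7 statements merged into one kernel-verified Lean document; each statement's English description precedes it below -/
import Mathlib

section
/- Let (X, μ) be a measure space with 0 < μ(X) < ∞, let M⁰ ∈ (0,1), μ_s > 0, β > 1, ε ∈ (0,1], δ ∈ (0,1), and let ρ : X → ℝ be measurable with ρ ≥ 0 a.e. and ∫_X ρ dμ ≤ M⁰ μ(X). Then ∫_X 1/(2 μ_s + λ_{ε,δ}(ρ(x))) dμ(x) ≥ (1 − 2M⁰/(1+M⁰)) μ(X) / (2 μ_s + ((1+M⁰)/(1−M⁰))^β). -/
open MeasureTheory Real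

/-!
By Markov's inequality, `ρ` stays below a threshold `r ∈ (0, 1)` on a set of measure at least
`(1 - M⁰ / r) μ(X)`. On that set the viscosity is at most its untruncated value
`ε (r / (1 - r)) ^ β` at `r`, for every `δ`. The midpoint `r = (1 + M⁰) / 2` of `M⁰` and `1`
gives the constants of the theorem.
-/

open scoped ENNReal

section Markov

variable {X : Type*} [MeasurableSpace X] {μ : Measure X}

lemma one_sub_div_mul_measure_univ_le_measure_lt [IsFiniteMeasure μ] {f : X → ℝ≥0∞}
    (hf : AEMeasurable f μ) {m r : ℝ≥0∞} (hr0 : r ≠ 0) (hrtop : r ≠ ∞)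
    (hmean : ∫⁻ x, f x ∂μ ≤ m * μ Set.univ) :
    (1 - m / r) * μ Set.univ ≤ μ {x | f x < r} := by
  have markov : μ {x | r ≤ f x} ≤ m / r * μ Set.univ :=
    calc μ {x | r ≤ f x} ≤ (∫⁻ x, f x ∂μ) / r := meas_ge_le_lintegral_div hf hr0 hrtop
      _ ≤ m * μ Set.univ / r := by gcongr
      _ = m / r * μ Set.univ := ENNReal.mul_div_right_comm
  have compl_lt : {x | f x < r}ᶜ = {x | r ≤ f x} := by ext; simp
  rw [ENNReal.sub_mul fun _ _ ↦ measure_ne_top μ _, one_mul, tsub_le_iff_right]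
  calc μ Set.univ ≤ μ {x | f x < r} + μ {x | f x < r}ᶜ := measure_univ_le_add_compl _
    _ ≤ μ {x | f x < r} + m / r * μ Set.univ := by rw [compl_lt]; gcongr

lemma ofReal_one_sub_div_mul_measure_univ_le_measure_lt [IsFiniteMeasure μ] {f : X → ℝ}
    (hf : AEMeasurable f μ) {m r : ℝ} (hm : 0 ≤ m) (hr : 0 < r)
    (hmean : ∫⁻ x, ENNReal.ofReal (f x) ∂μ ≤ ENNReal.ofReal m * μ Set.univ) :
    ENNReal.ofReal (1 - m / r) * μ Set.univ ≤ μ {x | f x < r} := by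
  have key := one_sub_div_mul_measure_univ_le_measure_lt hf.ennreal_ofReal
    (ENNReal.ofReal_pos.mpr hr).ne' ENNReal.ofReal_ne_top hmean
  simpa only [ENNReal.ofReal_lt_ofReal_iff hr, ENNReal.ofReal_sub 1 (div_nonneg hm hr.le),
    ENNReal.ofReal_one, ENNReal.ofReal_div_of_pos hr] using key

lemma const_mul_measure_le_lintegral {s : Set X} (hs : NullMeasurableSet s μ) {g : X → ℝ≥0∞}
    {c : ℝ≥0∞} (hg : ∀ᵐ x ∂μ, x ∈ s → c ≤ g x) : c * μ s ≤ ∫⁻ x, g x ∂μ :=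
  calc c * μ s = ∫⁻ _ in s, c ∂μ := (setLIntegral_const s c).symm
    _ ≤ ∫⁻ x in s, g x ∂μ := lintegral_mono_ae ((ae_restrict_iff'₀ hs).mpr hg)
    _ ≤ ∫⁻ x, g x ∂μ := setLIntegral_le_lintegral s g

end Markov

/-- The truncated bulk viscosity `λ_{ε,δ}(ρ)`: the singular law `ε (ρ / (1 - ρ)) ^ β`, with the
denominator `1 - ρ` replaced by `δ` once it drops below `δ`. -/
noncomputable def truncatedBulkViscosity (ε β δ ρ : ℝ) : ℝ :=
  if ρ ≤ 1 - δ then ε * (ρ / (1 - ρ)) ^ β else ε * (ρ / δ) ^ β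

section Viscosity

variable {ε ε₀ β δ ρ : ℝ}

lemma truncatedBulkViscosity_eq_max :
    truncatedBulkViscosity ε β δ ρ = ε * (ρ / max (1 - ρ) δ) ^ β := by
  unfold truncatedBulkViscosity
  split_ifs with h
  · rw [max_eq_left (by linarith)]
  · rw [max_eq_right (by linarith)]

lemma truncatedBulkViscosity_nonneg (hε : 0 ≤ ε) (hδ : 0 ≤ δ) (hρ : 0 ≤ ρ) :
    0 ≤ truncatedBulkViscosity ε β δ ρ := by
  rw [truncatedBulkViscosity_eq_max]
  positivity

lemma truncatedBulkViscosity_le_of_le {r : ℝ} (hε : 0 ≤ ε) (hε₀ : ε ≤ ε₀) (hβ : 0 ≤ β)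
    (hρ : 0 ≤ ρ) (hρr : ρ ≤ r) (hr : r < 1) :
    truncatedBulkViscosity ε β δ ρ ≤ ε₀ * (r / (1 - r)) ^ β := by
  have one_sub_le : 1 - r ≤ max (1 - ρ) δ := le_max_of_le_left (by linarith)
  have one_sub_pos : 0 < 1 - r := sub_pos.mpr hr
  have max_pos : 0 < max (1 - ρ) δ := one_sub_pos.trans_le one_sub_le
  have r_nonneg : 0 ≤ r := hρ.trans hρr
  have ε₀_nonneg : 0 ≤ ε₀ := hε.trans hε₀
  rw [truncatedBulkViscosity_eq_max]
  gcongr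

end Viscosity

section LowerBound

variable {X : Type*} [MeasurableSpace X] {μ : Measure X} [IsFiniteMeasure μ]
  {ε ε₀ β δ : ℝ} {ρ : X → ℝ}

lemma le_lintegral_one_div_add_truncatedBulkViscosity {a m r : ℝ} (ha : 0 < a)
    (hm : 0 ≤ m) (hr : r ∈ Set.Ioo (0 : ℝ) 1) (hε : 0 ≤ ε) (hε₀ : ε ≤ ε₀)
    (hβ : 0 ≤ β) (hδ : 0 ≤ δ) (hρm : AEMeasurable ρ μ) (hρ0 : ∀ᵐ x ∂μ, 0 ≤ ρ x)
    (hmass : ∫⁻ x, ENNReal.ofReal (ρ x) ∂μ ≤ ENNReal.ofReal m * μ Set.univ) :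
    ENNReal.ofReal ((1 - m / r) / (a + ε₀ * (r / (1 - r)) ^ β)) * μ Set.univ
      ≤ ∫⁻ x, ENNReal.ofReal (1 / (a + truncatedBulkViscosity ε β δ (ρ x))) ∂μ := by
  obtain ⟨hr0, hr1⟩ := hr
  set D := a + ε₀ * (r / (1 - r)) ^ β
  have D_pos : 0 < D := add_pos_of_pos_of_nonneg ha <|
    mul_nonneg (hε.trans hε₀) (rpow_nonneg (div_nonneg hr0.le (sub_nonneg.mpr hr1.le)) β)
  have pointwise : ∀ᵐ x ∂μ, x ∈ {x | ρ x < r} →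
      ENNReal.ofReal (1 / D) ≤
        ENNReal.ofReal (1 / (a + truncatedBulkViscosity ε β δ (ρ x))) := by
    filter_upwards [hρ0] with x hρx hxr
    have visc_nonneg := truncatedBulkViscosity_nonneg (β := β) hε hδ hρx
    have visc_le := truncatedBulkViscosity_le_of_le (δ := δ) hε hε₀ hβ hρx (le_of_lt hxr) hr1
    exact ENNReal.ofReal_le_ofReal <| one_div_le_one_div_of_le
      (add_pos_of_pos_of_nonneg ha visc_nonneg) (add_le_add_right visc_le a)
  calc ENNReal.ofReal ((1 - m / r) / D) * μ Set.univ
      = ENNReal.ofReal (1 / D) * (ENNReal.ofReal (1 - m / r) * μ Set.univ) := by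
        rw [← mul_assoc, ← ENNReal.ofReal_mul (one_div_nonneg.mpr D_pos.le), one_div_mul_eq_div]
    _ ≤ ENNReal.ofReal (1 / D) * μ {x | ρ x < r} := by
        gcongr
        exact ofReal_one_sub_div_mul_measure_univ_le_measure_lt hρm hm hr0 hmass
    _ ≤ _ := const_mul_measure_le_lintegral
        (nullMeasurableSet_lt hρm aemeasurable_const) pointwise

theorem stmt0_general {M0 μs : ℝ} (hM0 : M0 ∈ Set.Ico (0 : ℝ) 1) (hμs : 0 < μs)
    (hε : 0 ≤ ε) (hε₀ : ε ≤ ε₀) (hβ : 0 ≤ β) (hδ : 0 < δ)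
    (hρm : AEMeasurable ρ μ) (hρ0 : ∀ᵐ x ∂μ, 0 ≤ ρ x)
    (hmass : ∫⁻ x, ENNReal.ofReal (ρ x) ∂μ ≤ ENNReal.ofReal M0 * μ Set.univ) :
    ENNReal.ofReal
        ((1 - 2 * M0 / (1 + M0)) / (2 * μs + ε₀ * ((1 + M0) / (1 - M0)) ^ β)) * μ Set.univ
      ≤ ∫⁻ x, ENNReal.ofReal (1 / (2 * μs + truncatedBulkViscosity ε β δ (ρ x))) ∂μ := by
  obtain ⟨hM0_nonneg, hM0_lt⟩ := hM0
  have midpoint_mem : (1 + M0) / 2 ∈ Set.Ioo (0 : ℝ) 1 := ⟨by linarith, by linarith⟩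
  have mass_ratio : M0 / ((1 + M0) / 2) = 2 * M0 / (1 + M0) := by
    rw [div_div_eq_mul_div, mul_comm]
  have midpoint_ratio : (1 + M0) / 2 / (1 - (1 + M0) / 2) = (1 + M0) / (1 - M0) := by
    rw [show 1 - (1 + M0) / 2 = (1 - M0) / 2 by ring, div_div_div_cancel_right₀ two_ne_zero]
  simpa only [mass_ratio, midpoint_ratio] using
    le_lintegral_one_div_add_truncatedBulkViscosity (by positivity : 0 < 2 * μs)
      hM0_nonneg midpoint_mem hε hε₀ hβ hδ.le hρm hρ0 hmass

end LowerBound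

/-- Lemma 3 of the paper: uniform lower bound on the integral of
`ν_{ε,δ}(ρ) = 1/(2μ_s + λ_{ε,δ}(ρ))`, where the truncated bulk viscosity is
`λ_{ε,δ}(ρ) = ε (ρ/(1−ρ))^β` for `ρ ≤ 1−δ` and `ε (ρ/δ)^β` for `ρ > 1−δ`. -/
theorem stmt0 {X : Type*} [MeasurableSpace X] (μ : Measure X)
    (hμ0 : 0 < μ Set.univ) (hμfin : μ Set.univ < ⊤)
    (M0 μs ε β δ : ℝ) (hM0 : M0 ∈ Set.Ioo (0:ℝ) 1) (hμs : 0 < μs)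
    (hβ : 1 < β) (hε : ε ∈ Set.Ioc (0:ℝ) 1) (hδ : δ ∈ Set.Ioo (0:ℝ) 1)
    (ρ : X → ℝ) (hρm : Measurable ρ) (hρ0 : ∀ᵐ x ∂μ, 0 ≤ ρ x)
    (hmass : ∫⁻ x, ENNReal.ofReal (ρ x) ∂μ ≤ ENNReal.ofReal M0 * μ Set.univ) :
    ENNReal.ofReal ((1 - 2 * M0 / (1 + M0)) / (2 * μs + ((1 + M0) / (1 - M0)) ^ β))
        * μ Set.univ
      ≤ ∫⁻ x, ENNReal.ofReal
          (1 / (2 * μs +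
            (if ρ x ≤ 1 - δ then ε * (ρ x / (1 - ρ x)) ^ β else ε * (ρ x / δ) ^ β))) ∂μ := by
  have : IsFiniteMeasure μ := ⟨hμfin⟩
  simpa only [one_mul, truncatedBulkViscosity] using stmt0_general ⟨hM0.1.le, hM0.2⟩ hμs hε.1.le
    hε.2 (zero_le_one.trans hβ.le) hδ.1 hρm.aemeasurable hρ0 hmass
end

section
/- Let (X, μ) be a measure space, γ > 1, ε > 0, δ ∈ (0,1), C ≥ 0, and let ρ : X → ℝ be measurable with ρ ≥ 0 a.e. and ∫_X H_{ε,δ}(ρ(x)) dμ(x) ≤ C. Then μ{x ∈ X : ρ(x) ≥ 1−δ} ≤ C (γ−1) δ^{γ−1} / (ε (1−δ)^γ). -/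
open MeasureTheory Real

/-! At the junction `r = 1 - δ` the two branches of the truncated energy agree, because
`1 - (1 - δ) = δ`. On `[1 - δ, ∞)` it is therefore a positive multiple of `r ^ γ - (1 - δ) ^ γ * r`,
which is increasing there: `r ^ γ` grows at rate at least `(1 - δ) ^ (γ - 1) ≥ (1 - δ) ^ γ`. So
`ρ ≥ 1 - δ` forces the energy to be at least its value at `1 - δ`, and Markov's inequality at that
level is the estimate. -/

/-- The truncated internal energy `H_{ε,δ}` at density `r`: the potential that is singular at
density `1`, used up to `1 - δ` and continued beyond by a power law with a linear correction. The
first branch is also used for `r < 0`, which has no physical meaning. -/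
noncomputable def truncatedInternalEnergy (γ ε δ r : ℝ) : ℝ :=
  if r ≤ 1 - δ then ε / (γ - 1) * r ^ γ / (1 - r) ^ (γ - 1)
  else ε / (γ - 1) * r ^ γ / δ ^ γ - ε / ((γ - 1) * δ ^ γ) * (1 - δ) ^ γ * r

theorem rpow_sub_one_mul_sub_le_rpow_sub_rpow {r s γ : ℝ} (hr : 0 ≤ r) (hrs : r ≤ s)
    (hγ : 1 ≤ γ) : r ^ (γ - 1) * (s - r) ≤ s ^ γ - r ^ γ := by
  have hs : 0 ≤ s := hr.trans hrs
  have rpow_eq {y : ℝ} (hy : 0 ≤ y) : y ^ γ = y ^ (γ - 1) * y := by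
    rw [← rpow_add_one' hy (by linarith), sub_add_cancel]
  calc r ^ (γ - 1) * (s - r) = r ^ (γ - 1) * s - r ^ (γ - 1) * r := mul_sub ..
    _ ≤ s ^ (γ - 1) * s - r ^ (γ - 1) * r := by gcongr
    _ = s ^ γ - r ^ γ := by rw [rpow_eq hs, rpow_eq hr]

theorem monotoneOn_rpow_sub_rpow_mul {a γ : ℝ} (ha₀ : 0 < a) (ha₁ : a ≤ 1) (hγ : 1 ≤ γ) :
    MonotoneOn (fun r ↦ r ^ γ - a ^ γ * r) (Set.Ici a) := by
  intro r (hr : a ≤ r) s _ hrs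
  have rpow_le : a ^ γ ≤ r ^ (γ - 1) :=
    calc a ^ γ ≤ a ^ (γ - 1) := rpow_le_rpow_of_exponent_ge ha₀ ha₁ (sub_le_self γ zero_le_one)
      _ ≤ r ^ (γ - 1) := rpow_le_rpow ha₀.le hr (sub_nonneg.2 hγ)
  have increment_le : a ^ γ * (s - r) ≤ s ^ γ - r ^ γ :=
    (mul_le_mul_of_nonneg_right rpow_le (sub_nonneg.2 hrs)).trans
      (rpow_sub_one_mul_sub_le_rpow_sub_rpow (ha₀.le.trans hr) hrs hγ)
  linarith

section TruncatedInternalEnergy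

variable {γ ε δ r : ℝ}

theorem truncatedInternalEnergy_one_sub :
    truncatedInternalEnergy γ ε δ (1 - δ) = ε / (γ - 1) * (1 - δ) ^ γ / δ ^ (γ - 1) := by
  rw [truncatedInternalEnergy, if_pos le_rfl, sub_sub_cancel]

theorem truncatedInternalEnergy_of_one_sub_le (hδ : 0 < δ) (hr : 1 - δ ≤ r) :
    truncatedInternalEnergy γ ε δ r = ε / ((γ - 1) * δ ^ γ) * (r ^ γ - (1 - δ) ^ γ * r) := by
  obtain rfl | hr := hr.eq_or_lt
  · rw [truncatedInternalEnergy_one_sub, rpow_sub_one hδ.ne']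
    field_simp
    ring
  · rw [truncatedInternalEnergy, if_neg hr.not_ge]
    field_simp

theorem monotoneOn_truncatedInternalEnergy (hγ : 1 < γ) (hε : 0 ≤ ε) (hδ₀ : 0 < δ) (hδ₁ : δ < 1) :
    MonotoneOn (truncatedInternalEnergy γ ε δ) (Set.Ici (1 - δ)) := by
  have coeff_nonneg : 0 ≤ ε / ((γ - 1) * δ ^ γ) :=
    div_nonneg hε (mul_nonneg (sub_nonneg.2 hγ.le) (rpow_nonneg hδ₀.le γ))
  refine MonotoneOn.congr ?_ fun r hr ↦ (truncatedInternalEnergy_of_one_sub_le hδ₀ hr).symm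
  intro r hr s hs hrs
  exact mul_le_mul_of_nonneg_left
    (monotoneOn_rpow_sub_rpow_mul (sub_pos.2 hδ₁) (sub_le_self 1 hδ₀.le) hγ.le hr hs hrs)
    coeff_nonneg

end TruncatedInternalEnergy

theorem measure_le_ofReal_div_of_forall_le {X : Type*} [MeasurableSpace X] {μ : Measure X}
    {s : Set X} (hs : NullMeasurableSet s μ) {f : X → ℝ} {c C : ℝ} (hc : 0 < c)
    (hf : ∀ x ∈ s, c ≤ f x) (hC : ∫⁻ x, ENNReal.ofReal (f x) ∂μ ≤ ENNReal.ofReal C) :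
    μ s ≤ ENNReal.ofReal (C / c) := by
  rw [ENNReal.ofReal_div_of_pos hc,
    ENNReal.le_div_iff_mul_le (.inl (ENNReal.ofReal_pos.2 hc).ne') (.inl ENNReal.ofReal_ne_top),
    mul_comm]
  calc ENNReal.ofReal c * μ s = ∫⁻ x, s.indicator (fun _ ↦ ENNReal.ofReal c) x ∂μ :=
        (lintegral_indicator_const₀ hs _).symm
    _ ≤ ∫⁻ x, ENNReal.ofReal (f x) ∂μ :=
        lintegral_mono (Set.indicator_le fun x hx ↦ ENNReal.ofReal_le_ofReal (hf x hx))
    _ ≤ ENNReal.ofReal C := hC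

/-- Control of the truncated internal energy
`H_{ε,δ}(ρ) = (ε/(γ−1)) ρ^γ/(1−ρ)^{γ−1}` for `ρ ≤ 1−δ`,
`(ε/(γ−1)) ρ^γ/δ^γ − (ε/((γ−1)δ^γ))(1−δ)^γ ρ` for `ρ > 1−δ`,
yields an estimate of order `δ^{γ−1}` of the measure of `{ρ ≥ 1−δ}`. -/
theorem stmt1 {X : Type*} [MeasurableSpace X] (μ : Measure X)
    (γ ε δ C : ℝ) (hγ : 1 < γ) (hε : 0 < ε) (hδ : δ ∈ Set.Ioo (0:ℝ) 1) (hC : 0 ≤ C)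
    (ρ : X → ℝ) (hρm : Measurable ρ) (hρ0 : ∀ᵐ x ∂μ, 0 ≤ ρ x)
    (hH : ∫⁻ x, ENNReal.ofReal
        (if ρ x ≤ 1 - δ then ε / (γ - 1) * (ρ x) ^ γ / (1 - ρ x) ^ (γ - 1)
         else ε / (γ - 1) * (ρ x) ^ γ / δ ^ γ
                - ε / ((γ - 1) * δ ^ γ) * (1 - δ) ^ γ * ρ x) ∂μ
      ≤ ENNReal.ofReal C) :
    μ {x | 1 - δ ≤ ρ x}
      ≤ ENNReal.ofReal (C * (γ - 1) * δ ^ (γ - 1) / (ε * (1 - δ) ^ γ)) := by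
  obtain ⟨hδ₀, hδ₁⟩ := hδ
  have level_pos : 0 < truncatedInternalEnergy γ ε δ (1 - δ) := by
    rw [truncatedInternalEnergy_one_sub]
    exact div_pos (mul_pos (div_pos hε (sub_pos.2 hγ)) (rpow_pos_of_pos (sub_pos.2 hδ₁) γ))
      (rpow_pos_of_pos hδ₀ _)
  have level_le (x : X) (hx : 1 - δ ≤ ρ x) :
      truncatedInternalEnergy γ ε δ (1 - δ) ≤ truncatedInternalEnergy γ ε δ (ρ x) :=
    monotoneOn_truncatedInternalEnergy hγ hε.le hδ₀ hδ₁ Set.self_mem_Ici hx hx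
  calc μ {x | 1 - δ ≤ ρ x}
      ≤ ENNReal.ofReal (C / truncatedInternalEnergy γ ε δ (1 - δ)) :=
        measure_le_ofReal_div_of_forall_le
          (measurableSet_le measurable_const hρm).nullMeasurableSet level_pos level_le hH
    _ = ENNReal.ofReal (C * (γ - 1) * δ ^ (γ - 1) / (ε * (1 - δ) ^ γ)) := by
        rw [truncatedInternalEnergy_one_sub]
        field_simp
end

section
/- Let (X, μ) be a measure space, β > 1, ε > 0, δ ∈ (0,1), C ≥ 0, and let ρ : X → ℝ be measurable with ρ ≥ 0 a.e. and ∫_X Λ_{ε,δ}(ρ(x)) dμ(x) ≤ C. Then μ{x ∈ X : ρ(x) ≥ 1−δ} ≤ C (β−1) δ^{β−1} / (ε (1−δ)^β). -/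
open MeasureTheory Real

/-!
On `[1 - δ, ∞)` the function `Λ_{ε,δ}` is bounded below by its value
`ε (1 - δ)^β / ((β - 1) δ^(β - 1))` at `1 - δ`: beyond `1 - δ`, the superlinear growth of `r ^ β`
dominates that of the subtracted linear term.
Markov's inequality for `Λ_{ε,δ} ∘ ρ` at this level then bounds the measure of `{1 - δ ≤ ρ}`.
-/

lemma rpow_mul_div_le_rpow {a r p : ℝ} (ha : 0 < a) (har : a ≤ r) (hp : 1 ≤ p) :
    a ^ p * (r / a) ≤ r ^ p := by
  have hap : 0 < a ^ p := rpow_pos_of_pos ha p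
  calc a ^ p * (r / a) ≤ a ^ p * (r / a) ^ p := by
        gcongr
        exact self_le_rpow_of_one_le ((one_le_div ha).2 har) hp
    _ = r ^ p := by rw [div_rpow (ha.le.trans har) ha.le, mul_div_cancel₀ _ hap.ne']

lemma rpow_mul_one_sub_le_rpow_sub_rpow_mul {a r p : ℝ} (ha : 0 < a) (ha1 : a ≤ 1)
    (har : a ≤ r) (hp : 1 ≤ p) :
    a ^ p * (1 - a) ≤ r ^ p - a ^ p * r := by
  have hratio : 1 ≤ r / a := (one_le_div ha).2 har
  calc a ^ p * (1 - a) ≤ a ^ p * (r / a * (1 - a)) := by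
        gcongr
        exact le_mul_of_one_le_left (sub_nonneg.2 ha1) hratio
    _ = a ^ p * (r / a) - a ^ p * r := by field_simp
    _ ≤ r ^ p - a ^ p * r := by
        gcongr
        exact rpow_mul_div_le_rpow ha har hp

/-- The truncated quantity `Λ_{ε,δ}` as a function of the density `r`, used to control how often
the density is close to `1`. It is defined for all real `r`, but meaningful only for `0 ≤ r`:
for negative `r` the real power `r ^ β` takes a conventional value. -/
noncomputable def truncatedLambda (β ε δ r : ℝ) : ℝ :=
  if r ≤ 1 - δ then ε / (β - 1) * r ^ β / (1 - r) ^ (β - 1)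
  else ε / (β - 1) * r ^ β / δ ^ β - ε / ((β - 1) * δ ^ β) * (1 - δ) ^ β * r

section truncatedLambda

variable {β ε δ r : ℝ}

lemma measurable_truncatedLambda : Measurable (truncatedLambda β ε δ) :=
  Measurable.ite measurableSet_Iic (by fun_prop) (by fun_prop)

lemma truncatedLambda_one_sub :
    truncatedLambda β ε δ (1 - δ) = ε / (β - 1) * (1 - δ) ^ β / δ ^ (β - 1) := by
  rw [truncatedLambda, if_pos le_rfl, sub_sub_cancel]

lemma truncatedLambda_of_one_sub_lt (hr : 1 - δ < r) :
    truncatedLambda β ε δ r = ε / ((β - 1) * δ ^ β) * (r ^ β - (1 - δ) ^ β * r) := by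
  rw [truncatedLambda, if_neg hr.not_ge, ← div_div]
  ring

lemma truncatedLambda_one_sub_pos (hβ : 1 < β) (hε : 0 < ε) (hδ : δ ∈ Set.Ioo (0 : ℝ) 1) :
    0 < truncatedLambda β ε δ (1 - δ) := by
  rw [truncatedLambda_one_sub]
  exact div_pos (mul_pos (div_pos hε (sub_pos.2 hβ)) (rpow_pos_of_pos (sub_pos.2 hδ.2) β))
    (rpow_pos_of_pos hδ.1 (β - 1))

lemma truncatedLambda_one_sub_le (hβ : 1 < β) (hε : 0 ≤ ε) (hδ : δ ∈ Set.Ioo (0 : ℝ) 1)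
    (hr : 1 - δ ≤ r) :
    truncatedLambda β ε δ (1 - δ) ≤ truncatedLambda β ε δ r := by
  obtain rfl | hlt := hr.eq_or_lt
  · rfl
  have hβ' : 0 < β - 1 := sub_pos.2 hβ
  have hδ0 : 0 < δ := hδ.1
  have growth : (1 - δ) ^ β * δ ≤ r ^ β - (1 - δ) ^ β * r := by
    simpa only [sub_sub_cancel] using
      rpow_mul_one_sub_le_rpow_sub_rpow_mul (sub_pos.2 hδ.2) (sub_le_self 1 hδ0.le) hr hβ.le
  calc truncatedLambda β ε δ (1 - δ)
      = ε / ((β - 1) * δ ^ β) * ((1 - δ) ^ β * δ) := by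
        rw [truncatedLambda_one_sub, rpow_sub_one hδ0.ne']
        field_simp
    _ ≤ ε / ((β - 1) * δ ^ β) * (r ^ β - (1 - δ) ^ β * r) := by gcongr
    _ = truncatedLambda β ε δ r := (truncatedLambda_of_one_sub_lt hlt).symm

end truncatedLambda

/-- Control of the truncated quantity
`Λ_{ε,δ}(ρ) = (ε/(β−1)) ρ^β/(1−ρ)^{β−1}` for `ρ ≤ 1−δ`,
`(ε/(β−1)) ρ^β/δ^β − (ε/((β−1)δ^β))(1−δ)^β ρ` for `ρ > 1−δ`,
yields an estimate of order `δ^{β−1}` of the measure of `{ρ ≥ 1−δ}`. -/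
theorem stmt2 {X : Type*} [MeasurableSpace X] (μ : Measure X)
    (β ε δ C : ℝ) (hβ : 1 < β) (hε : 0 < ε) (hδ : δ ∈ Set.Ioo (0:ℝ) 1) (hC : 0 ≤ C)
    (ρ : X → ℝ) (hρm : Measurable ρ) (hρ0 : ∀ᵐ x ∂μ, 0 ≤ ρ x)
    (hΛ : ∫⁻ x, ENNReal.ofReal
        (if ρ x ≤ 1 - δ then ε / (β - 1) * (ρ x) ^ β / (1 - ρ x) ^ (β - 1)
         else ε / (β - 1) * (ρ x) ^ β / δ ^ β
                - ε / ((β - 1) * δ ^ β) * (1 - δ) ^ β * ρ x) ∂μ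
      ≤ ENNReal.ofReal C) :
    μ {x | 1 - δ ≤ ρ x}
      ≤ ENNReal.ofReal (C * (β - 1) * δ ^ (β - 1) / (ε * (1 - δ) ^ β)) := by
  have hlevel : 0 < truncatedLambda β ε δ (1 - δ) := truncatedLambda_one_sub_pos hβ hε hδ
  have hmeas : Measurable fun x ↦ ENNReal.ofReal (truncatedLambda β ε δ (ρ x)) :=
    (measurable_truncatedLambda.comp hρm).ennreal_ofReal
  calc μ {x | 1 - δ ≤ ρ x}
      ≤ μ {x | ENNReal.ofReal (truncatedLambda β ε δ (1 - δ))
            ≤ ENNReal.ofReal (truncatedLambda β ε δ (ρ x))} :=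
        measure_mono fun x hx ↦
          ENNReal.ofReal_le_ofReal (truncatedLambda_one_sub_le hβ hε.le hδ hx)
    _ ≤ (∫⁻ x, ENNReal.ofReal (truncatedLambda β ε δ (ρ x)) ∂μ)
          / ENNReal.ofReal (truncatedLambda β ε δ (1 - δ)) :=
        meas_ge_le_lintegral_div hmeas.aemeasurable (ENNReal.ofReal_pos.2 hlevel).ne'
          ENNReal.ofReal_ne_top
    _ ≤ ENNReal.ofReal C / ENNReal.ofReal (truncatedLambda β ε δ (1 - δ)) :=
        ENNReal.div_le_div_right hΛ _
    _ = ENNReal.ofReal (C / truncatedLambda β ε δ (1 - δ)) :=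
        (ENNReal.ofReal_div_of_pos hlevel).symm
    _ = ENNReal.ofReal (C * (β - 1) * δ ^ (β - 1) / (ε * (1 - δ) ^ β)) := by
        rw [truncatedLambda_one_sub]
        congr 1
        field_simp
end

section
/- Let γ ≥ β > 1, ε > 0, μ_s > 0 and δ ∈ (0,1) be real numbers. Then the function ρ ↦ p_{ε,δ}(ρ)/(2μ_s + λ_{ε,δ}(ρ)) is monotone nondecreasing on [0, ∞). -/
open Real

/-!
Both truncated laws are multiples of powers of one and the same quantity
`s(ρ) = ρ / max (1 - ρ) δ`, which is nonnegative and nondecreasing on `[0, ∞)`. It remains to see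
that `s ↦ s ^ γ / (a + b * s ^ β)` is nondecreasing for `0 ≤ β ≤ γ`. After cross-multiplication
this follows from the monotonicity of `s ^ γ` and of the quotient `s ^ γ / s ^ β = s ^ (γ - β)`.
-/

theorem div_const_add_le_div_const_add {K : Type*} [Field K] [LinearOrder K] [IsStrictOrderedRing K]
    {a x x' y y' : K} (ha : 0 < a) (hy : 0 ≤ y) (hy' : 0 ≤ y') (hx : x ≤ x')
    (hcross : x * y' ≤ x' * y) : x / (a + y) ≤ x' / (a + y') := by
  rw [div_le_div_iff₀ (by positivity) (by positivity), mul_add, mul_add]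
  gcongr

theorem rpow_mul_rpow_le_rpow_mul_rpow {s t β γ : ℝ} (hs : 0 ≤ s) (hst : s ≤ t) (hβ : 0 ≤ β)
    (hβγ : β ≤ γ) : s ^ γ * t ^ β ≤ t ^ γ * s ^ β := by
  have ht : 0 ≤ t := hs.trans hst
  have hd : 0 ≤ γ - β := sub_nonneg.2 hβγ
  have split_rpow {x : ℝ} (hx : 0 ≤ x) : x ^ γ = x ^ (γ - β) * x ^ β := by
    rw [← rpow_add_of_nonneg hx hd hβ, sub_add_cancel]
  calc s ^ γ * t ^ β = s ^ (γ - β) * (s ^ β * t ^ β) := by rw [split_rpow hs, mul_assoc]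
    _ ≤ t ^ (γ - β) * (s ^ β * t ^ β) := by gcongr
    _ = t ^ γ * s ^ β := by rw [split_rpow ht]; ring

theorem monotoneOn_rpow_div_const_add_mul_rpow {a b β γ : ℝ} (ha : 0 < a) (hb : 0 ≤ b)
    (hβ : 0 ≤ β) (hβγ : β ≤ γ) :
    MonotoneOn (fun s : ℝ => s ^ γ / (a + b * s ^ β)) (Set.Ici 0) := by
  intro s (hs : 0 ≤ s) t (ht : 0 ≤ t) hst
  refine div_const_add_le_div_const_add ha (by positivity) (by positivity)
    (rpow_le_rpow hs hst (hβ.trans hβγ)) ?_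
  rw [mul_left_comm, mul_left_comm (t ^ γ)]
  exact mul_le_mul_of_nonneg_left (rpow_mul_rpow_le_rpow_mul_rpow hs hst hβ hβγ) hb

/-- The singular ratio `ρ / (1 - ρ)` with its denominator truncated from below at `δ`. Powers of it
give both the truncated pressure and the truncated bulk viscosity, and the maximum encodes the case
distinction at `ρ = 1 - δ`. -/
noncomputable def truncatedRatio (δ ρ : ℝ) : ℝ :=
  ρ / max (1 - ρ) δ

theorem truncatedRatio_nonneg {δ ρ : ℝ} (hδ : 0 ≤ δ) (hρ : 0 ≤ ρ) : 0 ≤ truncatedRatio δ ρ :=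
  div_nonneg hρ (hδ.trans (le_max_right _ _))

theorem monotoneOn_truncatedRatio {δ : ℝ} (hδ : 0 < δ) :
    MonotoneOn (truncatedRatio δ) (Set.Ici 0) := fun _ _ _ hb hab =>
  div_le_div₀ hb hab (lt_max_of_lt_right hδ) (max_le_max_right δ (sub_le_sub_left hab 1))

theorem ite_mul_rpow_eq_mul_truncatedRatio_rpow (ε α δ ρ : ℝ) :
    (if ρ ≤ 1 - δ then ε * (ρ / (1 - ρ)) ^ α else ε * (ρ / δ) ^ α) =
      ε * truncatedRatio δ ρ ^ α := by
  unfold truncatedRatio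
  split_ifs with h
  · rw [max_eq_left (le_sub_comm.1 h)]
  · rw [max_eq_right (sub_lt_comm.1 (not_le.1 h)).le]

theorem stmt11_general {γ β ε μs δ : ℝ} (hβ : 0 ≤ β) (hβγ : β ≤ γ) (hε : 0 < ε)
    (hμs : 0 < μs) (hδ : 0 < δ) :
    MonotoneOn (fun ρ : ℝ =>
      (if ρ ≤ 1 - δ then ε * (ρ / (1 - ρ)) ^ γ else ε * (ρ / δ) ^ γ) /
        (2 * μs + (if ρ ≤ 1 - δ then ε * (ρ / (1 - ρ)) ^ β else ε * (ρ / δ) ^ β)))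
      (Set.Ici (0:ℝ)) := by
  simp only [ite_mul_rpow_eq_mul_truncatedRatio_rpow, mul_div_assoc]
  have hmono := (monotoneOn_rpow_div_const_add_mul_rpow (mul_pos two_pos hμs) hε.le hβ hβγ).comp
    (monotoneOn_truncatedRatio hδ) fun _ hρ => truncatedRatio_nonneg hδ.le hρ
  exact fun _ ha _ hb hab => mul_le_mul_of_nonneg_left (hmono ha hb hab) hε.le

/-- In the dominant pressure regime `γ ≥ β > 1`, the function
`ρ ↦ p_{ε,δ}(ρ)/(2μ_s + λ_{ε,δ}(ρ))` built from the truncated laws is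
monotone nondecreasing on `[0,∞)`. -/
theorem stmt11 (γ β ε μs δ : ℝ) (hβ : 1 < β) (hβγ : β ≤ γ) (hε : 0 < ε)
    (hμs : 0 < μs) (hδ : δ ∈ Set.Ioo (0:ℝ) 1) :
    MonotoneOn (fun ρ : ℝ =>
      (if ρ ≤ 1 - δ then ε * (ρ / (1 - ρ)) ^ γ else ε * (ρ / δ) ^ γ) /
        (2 * μs + (if ρ ≤ 1 - δ then ε * (ρ / (1 - ρ)) ^ β else ε * (ρ / δ) ^ β)))
      (Set.Ici (0:ℝ)) :=
  stmt11_general (zero_le_one.trans hβ.le) hβγ hε hμs hδ.1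
end

section
/- Let γ ≥ β > 1, ε > 0, μ_s > 0 and 0 < δ ≤ δ⁰ < 1 be real numbers. Then for every ρ ≥ 0, p_{ε,δ⁰}(ρ)/(2μ_s + λ_{ε,δ⁰}(ρ)) ≤ p_{ε,δ}(ρ)/(2μ_s + λ_{ε,δ}(ρ)). -/
open Real

/-!
Pressure and bulk viscosity are power laws in the same truncated ratio `s = ρ / max (1 - ρ) δ`,
which is antitone in `δ`. As a function of `s`, the quotient is
`s ^ (γ - β) * (ε * s ^ β / (2 * μs + ε * s ^ β))`, a product of nonnegative monotone functions.
-/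

open Set

section OrderedField

variable {𝕜 : Type*} [Field 𝕜] [LinearOrder 𝕜] [IsStrictOrderedRing 𝕜]

theorem antitoneOn_div_max {r : 𝕜} (hr : 0 ≤ r) (a : 𝕜) :
    AntitoneOn (fun t => r / max a t) (Ioi 0) := by
  intro s hs t _ hst
  exact div_le_div_of_nonneg_left hr (lt_max_of_lt_right hs) (max_le_max_left a hst)

theorem monotoneOn_div_const_add {c : 𝕜} (hc : 0 < c) :
    MonotoneOn (fun t => t / (c + t)) (Ici 0) := by
  intro s hs t ht hst
  rw [mem_Ici] at hs ht
  have h_cross : c * s ≤ c * t := by gcongr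
  rw [div_le_div_iff₀ (by positivity) (by positivity)]
  linarith

end OrderedField

theorem monotoneOn_rpow_div_const_add_rpow {ε c β γ : ℝ} (hε : 0 ≤ ε) (hc : 0 < c)
    (hβ : 0 ≤ β) (hβγ : β ≤ γ) :
    MonotoneOn (fun s : ℝ => ε * s ^ γ / (c + ε * s ^ β)) (Ici 0) := by
  have h_factor : ∀ s ∈ Ici (0 : ℝ),
      s ^ (γ - β) * (ε * s ^ β / (c + ε * s ^ β)) = ε * s ^ γ / (c + ε * s ^ β) := by
    intro s hs
    have h_rpow : s ^ γ = s ^ (γ - β) * s ^ β := by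
      rw [← rpow_add_of_nonneg hs (sub_nonneg.2 hβγ) hβ, sub_add_cancel]
    rw [h_rpow]
    ring
  refine MonotoneOn.congr ?_ h_factor
  intro s hs t ht hst
  rw [mem_Ici] at hs ht
  have h_quotient : ε * s ^ β / (c + ε * s ^ β) ≤ ε * t ^ β / (c + ε * t ^ β) :=
    monotoneOn_div_const_add hc (mem_Ici.2 (by positivity)) (mem_Ici.2 (by positivity))
      (by gcongr)
  have h_rpow : s ^ (γ - β) ≤ t ^ (γ - β) := rpow_le_rpow hs hst (sub_nonneg.2 hβγ)
  exact mul_le_mul h_rpow h_quotient (by positivity) (by positivity)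

/-- The singular power law `ε (ρ / (1 - ρ)) ^ α`, truncated at distance `δ` from the congestion
density `ρ = 1`. The pressure `p_{ε,δ}` is the case `α = γ`, the bulk viscosity `λ_{ε,δ}` the case
`α = β`. -/
noncomputable def truncatedPowerLaw (ε α δ ρ : ℝ) : ℝ :=
  if ρ ≤ 1 - δ then ε * (ρ / (1 - ρ)) ^ α else ε * (ρ / δ) ^ α

theorem truncatedPowerLaw_eq_rpow_div_max (ε α δ ρ : ℝ) :
    truncatedPowerLaw ε α δ ρ = ε * (ρ / max (1 - ρ) δ) ^ α := by
  unfold truncatedPowerLaw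
  split_ifs with h
  · rw [max_eq_left (le_sub_comm.1 h)]
  · rw [max_eq_right (sub_lt_comm.1 (not_le.1 h)).le]

theorem stmt12_general {ε μs β γ ρ : ℝ} (hε : 0 ≤ ε) (hμs : 0 < μs) (hβ : 0 ≤ β) (hβγ : β ≤ γ)
    (hρ : 0 ≤ ρ) :
    AntitoneOn
      (fun δ => truncatedPowerLaw ε γ δ ρ / (2 * μs + truncatedPowerLaw ε β δ ρ)) (Ioi 0) := by
  simp only [truncatedPowerLaw_eq_rpow_div_max]
  have h_maps : MapsTo (fun δ => ρ / max (1 - ρ) δ) (Ioi 0) (Ici 0) := fun δ hδ =>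
    div_nonneg hρ (le_max_of_le_right (le_of_lt hδ))
  exact (monotoneOn_rpow_div_const_add_rpow hε (mul_pos two_pos hμs) hβ hβγ).comp_AntitoneOn
    (antitoneOn_div_max hρ (1 - ρ)) h_maps

/-- Monotonicity in the truncation parameter: for `δ ≤ δ⁰` one has
`b_{ε,δ⁰}(ρ) ≤ b_{ε,δ}(ρ)` where `b_{ε,δ}(ρ) = p_{ε,δ}(ρ)/(2μ_s + λ_{ε,δ}(ρ))`. -/
theorem stmt12 (γ β ε μs δ δ0 ρ : ℝ) (hβ : 1 < β) (hβγ : β ≤ γ) (hε : 0 < ε)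
    (hμs : 0 < μs) (hδ : 0 < δ) (hδδ0 : δ ≤ δ0) (hδ0 : δ0 < 1) (hρ : 0 ≤ ρ) :
    (if ρ ≤ 1 - δ0 then ε * (ρ / (1 - ρ)) ^ γ else ε * (ρ / δ0) ^ γ) /
        (2 * μs + (if ρ ≤ 1 - δ0 then ε * (ρ / (1 - ρ)) ^ β else ε * (ρ / δ0) ^ β))
      ≤ (if ρ ≤ 1 - δ then ε * (ρ / (1 - ρ)) ^ γ else ε * (ρ / δ) ^ γ) /
        (2 * μs + (if ρ ≤ 1 - δ then ε * (ρ / (1 - ρ)) ^ β else ε * (ρ / δ) ^ β)) :=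
  stmt12_general hε.le hμs (zero_le_one.trans hβ.le) hβγ hρ hδ (hδ.trans_le hδδ0) hδδ0
end

section
/- Let 1 < γ ≤ β, ε ∈ (0,1], μ_s > 0 and δ ∈ (0,1) be real numbers. Then for every ρ ≥ 0, p_{ε,δ}(ρ)/(2μ_s + λ_{ε,δ}(ρ)) ≤ max(1, 1/(2μ_s)). -/
open Real

/-!
On each branch of the truncation the pressure and the bulk viscosity are `ε * x ^ γ` and
`ε * x ^ β` with the same base `x ≥ 0`. Since `γ ≤ β`, the power `x ^ γ` is at most `1` for `x ≤ 1`
and at most `x ^ β` for `x ≥ 1`; the shear viscosity absorbs the first bound and the bulk viscosity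
the second.
-/

theorem rpow_le_max_one_rpow {x r s : ℝ} (hx : 0 ≤ x) (hr : 0 ≤ r) (hrs : r ≤ s) :
    x ^ r ≤ max 1 (x ^ s) := by
  rcases le_total x 1 with hx1 | hx1
  · exact le_max_of_le_left (rpow_le_one hx hx1 hr)
  · exact le_max_of_le_right (rpow_le_rpow_of_exponent_le hx1 hrs)

theorem div_add_le_max_one_div {K : Type*} [Field K] [LinearOrder K] [IsStrictOrderedRing K]
    {a b c p : K} (hc : 0 < c) (hb : 0 ≤ b) (hp : p ≤ max a b) :
    p / (c + b) ≤ max 1 (a / c) := by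
  have ha_le : a ≤ max 1 (a / c) * c := (div_le_iff₀ hc).1 (le_max_right _ _)
  have hb_le : b ≤ max 1 (a / c) * b := le_mul_of_one_le_left hb (le_max_left _ _)
  have hmax_nonneg : 0 ≤ max 1 (a / c) := zero_le_one.trans (le_max_left _ _)
  rw [div_le_iff₀ (add_pos_of_pos_of_nonneg hc hb), mul_add]
  calc
    p ≤ max a b := hp
    _ ≤ max (max 1 (a / c) * c) (max 1 (a / c) * b) := max_le_max ha_le hb_le
    _ ≤ max 1 (a / c) * c + max 1 (a / c) * b :=
      max_le_add_of_nonneg (mul_nonneg hmax_nonneg hc.le) (mul_nonneg hmax_nonneg hb)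

theorem mul_rpow_div_add_mul_rpow_le {a c x r s : ℝ} (ha : 0 ≤ a) (hc : 0 < c) (hx : 0 ≤ x)
    (hr : 0 ≤ r) (hrs : r ≤ s) :
    a * x ^ r / (c + a * x ^ s) ≤ max 1 (a / c) := by
  refine div_add_le_max_one_div hc (mul_nonneg ha (rpow_nonneg hx s)) ?_
  calc
    a * x ^ r ≤ a * max 1 (x ^ s) :=
      mul_le_mul_of_nonneg_left (rpow_le_max_one_rpow hx hr hrs) ha
    _ = max a (a * x ^ s) := by rw [mul_max_of_nonneg _ _ ha, mul_one]

theorem stmt13_general {γ β ε μs δ ρ : ℝ} (hγ : 0 ≤ γ) (hγβ : γ ≤ β) (hε : 0 ≤ ε)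
    (hμs : 0 < μs) (hδ : 0 < δ) (hρ : 0 ≤ ρ) :
    (if ρ ≤ 1 - δ then ε * (ρ / (1 - ρ)) ^ γ else ε * (ρ / δ) ^ γ) /
        (2 * μs + (if ρ ≤ 1 - δ then ε * (ρ / (1 - ρ)) ^ β else ε * (ρ / δ) ^ β))
      ≤ max 1 (ε / (2 * μs)) := by
  have hshear : 0 < 2 * μs := mul_pos two_pos hμs
  split_ifs with hρδ
  · have hbase : 0 ≤ ρ / (1 - ρ) := div_nonneg hρ (by linarith)
    exact mul_rpow_div_add_mul_rpow_le hε hshear hbase hγ hγβ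
  · exact mul_rpow_div_add_mul_rpow_le hε hshear (div_nonneg hρ hδ.le) hγ hγβ

/-- In the dominant bulk viscosity regime `1 < γ ≤ β` and for `ε ∈ (0,1]`, the
quantity `p_{ε,δ}(ρ)/(2μ_s + λ_{ε,δ}(ρ))` is bounded by `max(1, 1/(2μ_s))`,
uniformly in `δ` and `ε`. -/
theorem stmt13 (γ β ε μs δ ρ : ℝ) (hγ : 1 < γ) (hγβ : γ ≤ β)
    (hε : ε ∈ Set.Ioc (0:ℝ) 1) (hμs : 0 < μs) (hδ : δ ∈ Set.Ioo (0:ℝ) 1)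
    (hρ : 0 ≤ ρ) :
    (if ρ ≤ 1 - δ then ε * (ρ / (1 - ρ)) ^ γ else ε * (ρ / δ) ^ γ) /
        (2 * μs + (if ρ ≤ 1 - δ then ε * (ρ / (1 - ρ)) ^ β else ε * (ρ / δ) ^ β))
      ≤ max 1 (1 / (2 * μs)) :=
  (stmt13_general (zero_le_one.trans hγ.le) hγβ hε.1.le hμs hδ.1 hρ).trans <|
    max_le_max_left 1 (div_le_div_of_nonneg_right hε.2 (mul_pos two_pos hμs).le)
end

section
/- Let γ > β > 1 and ε > 0 be real numbers, and set α = (γ−β)/(γ−1). Then for every ρ ∈ [0,1), (H_ε(ρ))^{2α} · λ_ε(ρ) = ((ε ρ)/(γ−1))^{α} · (H_ε(ρ))^{α} · p_ε(ρ); in particular (H_ε(ρ))^{2α} λ_ε(ρ) ≤ (ε/(γ−1))^{α} (H_ε(ρ))^{α} p_ε(ρ) (real powers). -/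
open Real

/-!
With `r = ρ/(1-ρ)` the potential is `H_ε = (ερ/(γ-1)) r^(γ-1)`. The exponent `α = (γ-β)/(γ-1)` is
the one for which `H_ε^α = (ερ/(γ-1))^α r^(γ-β)`, and the factor `r^(γ-β)` turns `λ_ε = ε r^β` into
`p_ε = ε r^γ`.
-/

/-- The law `ρ ↦ ε (ρ/(1-ρ))^s` that blows up at the maximal density `1`: the pressure `p_ε` for
`s = γ`, the bulk viscosity `λ_ε` for `s = β`. -/
noncomputable def singularLaw (ε s ρ : ℝ) : ℝ := ε * (ρ / (1 - ρ)) ^ s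

/-- The potential `H_ε` of the pressure `p_ε = singularLaw ε γ`, normalized so that
`ρ H_ε' - H_ε = p_ε`. -/
noncomputable def singularPotential (ε γ ρ : ℝ) : ℝ :=
  ε / (γ - 1) * ρ ^ γ / (1 - ρ) ^ (γ - 1)

section

variable {γ β ε ρ : ℝ}

theorem singularLaw_nonneg (hε : 0 ≤ ε) (hρ0 : 0 ≤ ρ) (hρ1 : ρ ≤ 1) (s : ℝ) :
    0 ≤ singularLaw ε s ρ :=
  mul_nonneg hε (rpow_nonneg (div_nonneg hρ0 (sub_nonneg.2 hρ1)) s)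

theorem rpow_mul_singularLaw {s t : ℝ} (hs : 0 ≤ s) (ht : 0 ≤ t) (hρ0 : 0 ≤ ρ) (hρ1 : ρ ≤ 1)
    (ε : ℝ) : (ρ / (1 - ρ)) ^ s * singularLaw ε t ρ = singularLaw ε (s + t) ρ := by
  have hratio : 0 ≤ ρ / (1 - ρ) := div_nonneg hρ0 (sub_nonneg.2 hρ1)
  rw [singularLaw, singularLaw, rpow_add_of_nonneg hratio hs ht, mul_left_comm]

theorem singularPotential_nonneg (hγ : 1 ≤ γ) (hε : 0 ≤ ε) (hρ0 : 0 ≤ ρ) (hρ1 : ρ ≤ 1) :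
    0 ≤ singularPotential ε γ ρ :=
  div_nonneg (mul_nonneg (div_nonneg hε (sub_nonneg.2 hγ)) (rpow_nonneg hρ0 γ))
    (rpow_nonneg (sub_nonneg.2 hρ1) (γ - 1))

theorem singularPotential_eq_mul_rpow (hγ : γ ≠ 0) (hρ0 : 0 ≤ ρ) (hρ1 : ρ ≤ 1) (ε : ℝ) :
    singularPotential ε γ ρ = ε * ρ / (γ - 1) * (ρ / (1 - ρ)) ^ (γ - 1) := by
  have hρ_rpow : ρ ^ γ = ρ * ρ ^ (γ - 1) := by
    rw [← rpow_one_add' hρ0 (by simpa using hγ), add_sub_cancel]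
  rw [singularPotential, hρ_rpow, div_rpow hρ0 (sub_nonneg.2 hρ1)]
  ring

theorem singularPotential_rpow_div (hγ : 1 < γ) (hε : 0 ≤ ε) (hρ0 : 0 ≤ ρ) (hρ1 : ρ ≤ 1)
    (s : ℝ) :
    singularPotential ε γ ρ ^ (s / (γ - 1)) =
      (ε * ρ / (γ - 1)) ^ (s / (γ - 1)) * (ρ / (1 - ρ)) ^ s := by
  have hγ1 : 0 < γ - 1 := sub_pos.2 hγ
  have hratio : 0 ≤ ρ / (1 - ρ) := div_nonneg hρ0 (sub_nonneg.2 hρ1)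
  rw [singularPotential_eq_mul_rpow (by linarith) hρ0 hρ1,
    mul_rpow (by positivity) (by positivity), ← rpow_mul hratio, mul_div_cancel₀ s hγ1.ne']

theorem singularPotential_rpow_mul_singularLaw (hγ : 1 < γ) (hβ : 0 ≤ β) (hβγ : β ≤ γ)
    (hε : 0 ≤ ε) (hρ0 : 0 ≤ ρ) (hρ1 : ρ ≤ 1) :
    singularPotential ε γ ρ ^ ((γ - β) / (γ - 1)) * singularLaw ε β ρ =
      (ε * ρ / (γ - 1)) ^ ((γ - β) / (γ - 1)) * singularLaw ε γ ρ := by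
  rw [singularPotential_rpow_div hγ hε hρ0 hρ1, mul_assoc,
    rpow_mul_singularLaw (sub_nonneg.2 hβγ) hβ hρ0 hρ1, sub_add_cancel]

theorem stmt17_general (hγ : 1 < γ) (hβ : 0 ≤ β) (hβγ : β ≤ γ) (hε : 0 ≤ ε)
    (hρ0 : 0 ≤ ρ) (hρ1 : ρ < 1) :
    singularPotential ε γ ρ ^ (2 * ((γ - β) / (γ - 1))) * singularLaw ε β ρ =
        (ε * ρ / (γ - 1)) ^ ((γ - β) / (γ - 1)) *
          singularPotential ε γ ρ ^ ((γ - β) / (γ - 1)) * singularLaw ε γ ρ ∧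
      singularPotential ε γ ρ ^ (2 * ((γ - β) / (γ - 1))) * singularLaw ε β ρ ≤
        (ε / (γ - 1)) ^ ((γ - β) / (γ - 1)) *
          singularPotential ε γ ρ ^ ((γ - β) / (γ - 1)) * singularLaw ε γ ρ := by
  have hγ1 : 0 < γ - 1 := sub_pos.2 hγ
  have hH : 0 ≤ singularPotential ε γ ρ := singularPotential_nonneg hγ.le hε hρ0 hρ1.le
  have hp : 0 ≤ singularLaw ε γ ρ := singularLaw_nonneg hε hρ0 hρ1.le γ
  have hα : 0 ≤ (γ - β) / (γ - 1) := div_nonneg (sub_nonneg.2 hβγ) hγ1.le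
  have identity : singularPotential ε γ ρ ^ (2 * ((γ - β) / (γ - 1))) * singularLaw ε β ρ =
      (ε * ρ / (γ - 1)) ^ ((γ - β) / (γ - 1)) *
        singularPotential ε γ ρ ^ ((γ - β) / (γ - 1)) * singularLaw ε γ ρ := by
    rw [two_mul, rpow_add_of_nonneg hH hα hα, mul_assoc,
      singularPotential_rpow_mul_singularLaw hγ hβ hβγ hε hρ0 hρ1.le]
    ring
  have hρε : ε * ρ ≤ ε := mul_le_of_le_one_right hε hρ1.le
  refine ⟨identity, identity.trans_le ?_⟩
  gcongr

end

/-- Core computation of the equi-integrability lemma: with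
`α = (γ−β)/(γ−1)`, `H_ε(ρ) = (ε/(γ−1)) ρ^γ/(1−ρ)^{γ−1}`,
`p_ε(ρ) = ε (ρ/(1−ρ))^γ` and `λ_ε(ρ) = ε (ρ/(1−ρ))^β`, one has
`(H_ε)^{2α} λ_ε = ((ερ)/(γ−1))^α (H_ε)^α p_ε ≤ (ε/(γ−1))^α (H_ε)^α p_ε`. -/
theorem stmt17 (γ β ε ρ : ℝ) (hβ : 1 < β) (hβγ : β < γ) (hε : 0 < ε)
    (hρ0 : 0 ≤ ρ) (hρ1 : ρ < 1) :
    (ε / (γ - 1) * ρ ^ γ / (1 - ρ) ^ (γ - 1)) ^ (2 * ((γ - β) / (γ - 1)))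
          * (ε * (ρ / (1 - ρ)) ^ β)
        = (ε * ρ / (γ - 1)) ^ ((γ - β) / (γ - 1))
            * (ε / (γ - 1) * ρ ^ γ / (1 - ρ) ^ (γ - 1)) ^ ((γ - β) / (γ - 1))
            * (ε * (ρ / (1 - ρ)) ^ γ) ∧
    (ε / (γ - 1) * ρ ^ γ / (1 - ρ) ^ (γ - 1)) ^ (2 * ((γ - β) / (γ - 1)))
          * (ε * (ρ / (1 - ρ)) ^ β)
        ≤ (ε / (γ - 1)) ^ ((γ - β) / (γ - 1))
            * (ε / (γ - 1) * ρ ^ γ / (1 - ρ) ^ (γ - 1)) ^ ((γ - β) / (γ - 1))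
            * (ε * (ρ / (1 - ρ)) ^ γ) :=
  stmt17_general (hβ.trans hβγ) (zero_le_one.trans hβ.le) hβγ.le hε.le hρ0 hρ1
end
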